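/- arXiv:2602.20625 — 2 statements merged into one kernel-verified Lean document; each statement's English description precedes it below -/
import Mathlib

section
/- Let k ≥ 1 be a fixed integer and set δ = 1 if k is odd and δ = 2 if k is even. In the ring of formal power series in x over ℤ[y], let F = Σ_{n≥0} (Σ_{m∈P(n)} y^{B(m)}) x^n. Then ((1 − 2x)(1 − x²) − (y − 1)(1 − x)·x^{k+δ}) · F = (1 − x)(1 − x²). -/
open PowerSeries

/-- The number of parts of a composition that are even and strictly greater than `k`. -/
def Bstat (k : ℕ) {n : ℕ} (m : Composition n) : ℕ :=
  m.blocks.countP fun j => decide (Even j ∧ k < j)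

/-- The bivariate generating function `F(x,y) = Σ_n (Σ_{m ∈ P(n)} y^{B(m)}) x^n`,
viewed as a power series in `x` over `ℤ[y]`. -/
noncomputable def Fgen (k : ℕ) : PowerSeries (Polynomial ℤ) :=
  PowerSeries.mk fun n => ∑ m : Composition n, (Polynomial.X : Polynomial ℤ) ^ Bstat k m

noncomputable def wgt (k i : ℕ) : Polynomial ℤ :=
  if Even (i + 1) ∧ k < i + 1 then Polynomial.X else 1

def consComp (n : ℕ) (p : Σ i : Fin (n + 1), Composition (n - i)) : Composition (n + 1) where
  blocks := (p.1.val + 1) :: p.2.blocks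
  blocks_pos := by
    intro j hj
    rcases List.mem_cons.1 hj with h | h
    · omega
    · exact p.2.blocks_pos h
  blocks_sum := by
    have := p.1.2
    rw [List.sum_cons, p.2.blocks_sum]
    omega

theorem consComp_bij (n : ℕ) : Function.Bijective (consComp n) := by
  constructor
  · rintro ⟨i, c⟩ ⟨j, d⟩ h
    have h' := congrArg Composition.blocks h
    simp only [consComp, List.cons.injEq] at h'
    obtain ⟨h1, h2⟩ := h'
    have : i = j := Fin.ext (by omega)
    subst this
    have : c = d := Composition.ext h2
    rw [this]
  · rintro ⟨b, hp, hs⟩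
    cases b with
    | nil => simp at hs
    | cons a l =>
      have ha : 0 < a := hp (by simp)
      rw [List.sum_cons] at hs
      refine ⟨⟨⟨a - 1, by omega⟩, ⟨l, fun h => hp (by simp [h]), ?_⟩⟩, ?_⟩
      · simp only
        omega
      · apply Composition.ext
        simp only [consComp, List.cons.injEq, and_true]
        omega

theorem Bstat_cons (k n : ℕ) (p : Σ i : Fin (n + 1), Composition (n - i)) :
    (Polynomial.X : Polynomial ℤ) ^ Bstat k (consComp n p)
      = wgt k p.1 * Polynomial.X ^ Bstat k p.2 := by
  unfold Bstat wgt consComp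
  simp only [List.countP_cons, decide_eq_true_eq]
  split_ifs
  · rw [pow_succ, mul_comm]
  · simp

theorem Fgen_rec (k : ℕ) :
    Fgen k = 1 + PowerSeries.X * (PowerSeries.mk (wgt k) * Fgen k) := by
  ext1 n
  cases n with
  | zero =>
    simp only [Fgen, map_add, PowerSeries.coeff_mk, PowerSeries.coeff_zero_X_mul, add_zero]
    have hb : ∀ c : Composition 0, c.blocks = [] := fun c => (Composition.blocks_eq_nil c).2 rfl
    have hz : ∀ c : Composition 0, (Polynomial.X : Polynomial ℤ) ^ Bstat k c = 1 := by
      intro c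
      rw [Bstat, hb c]
      simp
    have hc : Fintype.card (Composition 0) = 1 := by
      rw [composition_card]
      rfl
    simp [hz, hc]
  | succ n =>
    rw [map_add, PowerSeries.coeff_succ_X_mul, PowerSeries.coeff_mul,
      Finset.Nat.sum_antidiagonal_eq_sum_range_succ_mk, Finset.sum_range]
    simp only [Fgen, PowerSeries.coeff_mk, PowerSeries.coeff_one]
    rw [← (consComp_bij n).sum_comp, Fintype.sum_sigma]
    simp [Bstat_cons, Finset.mul_sum]

theorem even_geom :
    (PowerSeries.mk fun n => if Even n then (1 : Polynomial ℤ) else 0) * (1 - PowerSeries.X ^ 2)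
      = 1 := by
  ext1 n
  rw [mul_sub, mul_one, map_sub, PowerSeries.coeff_mul_X_pow']
  simp only [PowerSeries.coeff_mk, PowerSeries.coeff_one]
  rcases n with _ | _ | n
  · simp
  · simp
  · simp [Nat.even_add]

theorem wgt_eq (k d : ℕ) (hd : Odd d) (h1 : k ≤ d) (h2 : d ≤ k + 1) :
    PowerSeries.mk (wgt k) = PowerSeries.mk 1 + PowerSeries.C (Polynomial.X - 1) *
      (PowerSeries.X ^ d * PowerSeries.mk fun n => if Even n then (1 : Polynomial ℤ) else 0) := by
  ext1 n
  rw [map_add, PowerSeries.coeff_C_mul, PowerSeries.coeff_X_pow_mul']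
  simp only [PowerSeries.coeff_mk, wgt, Pi.one_apply]
  by_cases h : Even (n + 1) ∧ k < n + 1
  · have a : d ≤ n := by grind
    have b : Even (n - d) := by grind
    simp [h, a, b]
  · rw [if_neg h]
    split_ifs with a b
    · exfalso
      apply h
      grind
    · simp
    · simp

theorem stmt2 (k : ℕ) (hk : 1 ≤ k) (δ : ℕ) (hδ : δ = if Odd k then 1 else 2) :
    ((1 - 2 * PowerSeries.X) * (1 - PowerSeries.X ^ 2)
        - PowerSeries.C (R := Polynomial ℤ) (Polynomial.X - 1) * (1 - PowerSeries.X)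
          * PowerSeries.X ^ (k + δ)) * Fgen k
      = (1 - PowerSeries.X) * (1 - PowerSeries.X ^ 2) := by
  obtain ⟨d, hd, e, h1, h2⟩ : ∃ d, Odd d ∧ k + δ = d + 1 ∧ k ≤ d ∧ d ≤ k + 1 := by
    by_cases h : Odd k
    · exact ⟨k, h, by simp [hδ, h], le_rfl, by omega⟩
    · exact ⟨k + 1, by grind, by simp [hδ, h], by omega, le_rfl⟩
  rw [e]
  have hF := Fgen_rec k
  rw [wgt_eq k d hd h1 h2] at hF
  have hE := even_geom
  have hG := PowerSeries.mk_one_mul_one_sub_eq_one (Polynomial ℤ)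
  generalize (PowerSeries.mk fun n => if Even n then (1 : Polynomial ℤ) else 0) = E at *
  generalize (PowerSeries.mk 1 : PowerSeries (Polynomial ℤ)) = G at *
  generalize Fgen k = F at *
  generalize PowerSeries.C (R := Polynomial ℤ) (Polynomial.X - 1) = c at *
  generalize (PowerSeries.X : PowerSeries (Polynomial ℤ)) = x at *
  linear_combination (1 - x) * (1 - x ^ 2) * hF + x * F * (1 - x ^ 2) * hG
    + x * F * c * x ^ d * (1 - x) * hE
end

section
/- Let k ≥ 2 be a fixed integer and set δ = 1 if k is odd and δ = 2 if k is even. Let R_k(X) = (1 − 2X)(1 + X) + X^{k+δ}, a polynomial of degree k + δ, and assume that R_k has k + δ pairwise distinct complex roots α_1, …, α_{k+δ}. For n ≥ 0 let c_k(n) denote the number of compositions of n having no even part strictly greater than k. Then for every n ≥ 0 one has, as an identity in ℂ: c_k(n) = Σ_{i=1}^{k+δ} C_i·α_i^{−n}, where C_i = −(1 − α_i²)/(α_i·R_k'(α_i)). -/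
/-- `cComp k n` is the number of compositions of `n` having no even part strictly
greater than `k`. -/
def cComp (k n : ℕ) : ℕ :=
  (Finset.univ.filter fun m : Composition n => Bstat k m = 0).card
def okPart (k j : ℕ) : Prop := 0 < j ∧ ¬ (Even j ∧ k < j)

instance (k j : ℕ) : Decidable (okPart k j) := by unfold okPart; infer_instance

def Lset (k n : ℕ) : Finset (List ℕ) :=
  (Finset.univ.filter fun m : Composition n => Bstat k m = 0).image Composition.blocks

lemma mem_Lset (k n : ℕ) (l : List ℕ) :
    l ∈ Lset k n ↔ (∀ x ∈ l, okPart k x) ∧ l.sum = n := by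
  simp only [Lset, Finset.mem_image, Finset.mem_filter, Finset.mem_univ, true_and, Bstat,
    List.countP_eq_zero, decide_eq_true_eq]
  constructor
  · rintro ⟨m, hm, rfl⟩
    exact ⟨fun x hx => ⟨m.blocks_pos hx, hm x hx⟩, m.blocks_sum⟩
  · rintro ⟨h, hs⟩
    exact ⟨⟨l, fun hx => (h _ hx).1, hs⟩, fun x hx => (h x hx).2, rfl⟩

lemma card_Lset (k n : ℕ) : (Lset k n).card = cComp k n := by
  unfold Lset cComp
  apply Finset.card_image_of_injective
  intro a b h
  exact Composition.ext h

lemma Lset_rec (k n : ℕ) (hn : 0 < n) :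
    Lset k n = ((Finset.HasAntidiagonal.antidiagonal n).filter fun p => okPart k p.1).biUnion
      (fun p => (Lset k p.2).image (List.cons p.1)) := by
  ext l
  simp only [Finset.mem_biUnion, Finset.mem_filter, Finset.HasAntidiagonal.mem_antidiagonal, Finset.mem_image,
    mem_Lset]
  constructor
  · rintro ⟨h, hs⟩
    cases l with
    | nil => simp at hs; omega
    | cons a t =>
      refine ⟨(a, t.sum), ⟨by simpa using hs, h a (by simp)⟩, t,
        ⟨fun x hx => h x (by simp [hx]), rfl⟩, rfl⟩
  · rintro ⟨⟨a, b⟩, ⟨hab, ha⟩, t, ⟨ht, hs⟩, rfl⟩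
    constructor
    · intro x hx
      rcases List.mem_cons.1 hx with rfl | hx
      · exact ha
      · exact ht x hx
    · simp at *; omega

lemma cComp_rec (k n : ℕ) (hn : 0 < n) :
    cComp k n = ∑ p ∈ Finset.HasAntidiagonal.antidiagonal n, (if okPart k p.1 then 1 else 0) * cComp k p.2 := by
  rw [← card_Lset, Lset_rec k n hn, Finset.card_biUnion, Finset.sum_filter]
  · apply Finset.sum_congr rfl
    intro p _
    rw [Finset.card_image_of_injective _ (List.cons_injective), card_Lset]
    split_ifs <;> simp
  · rintro ⟨a, b⟩ hp ⟨c, d⟩ hq hne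
    rw [Function.onFun, Finset.disjoint_left] <;> skip
    intro l h1 h2
    simp only [Finset.mem_image, Finset.mem_filter, Finset.HasAntidiagonal.mem_antidiagonal, Finset.coe_filter, Set.mem_setOf_eq] at *
    obtain ⟨t, _, rfl⟩ := h1
    obtain ⟨s, _, h⟩ := h2
    simp at h
    apply hne
    ext <;> simp <;> omega

lemma cComp_zero (k : ℕ) : cComp k 0 = 1 := by
  rw [← card_Lset, Finset.card_eq_one]
  refine ⟨[], ?_⟩
  ext l
  rw [mem_Lset, Finset.mem_singleton]
  constructor
  · rintro ⟨h, hs⟩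
    cases l with
    | nil => rfl
    | cons a t =>
      have := (h a (by simp)).1
      simp at hs; omega
  · rintro rfl; simp

open PowerSeries in
lemma gf (k δ : ℕ) (hk : 2 ≤ k) (hδ : δ = if Odd k then 1 else 2) :
    ((1 - 2 * X) * (1 + X) + X ^ (k + δ) : PowerSeries ℂ) * mk (fun n => (cComp k n : ℂ))
      = 1 - X ^ 2 := by
  set S : PowerSeries ℂ := mk fun n => if okPart k n then 1 else 0 with hS
  set Cg : PowerSeries ℂ := mk (fun n => (cComp k n : ℂ)) with hC
  have h1 : Cg = 1 + S * Cg := by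
    ext n
    rw [map_add, coeff_mul, coeff_one, hC, coeff_mk]
    rcases Nat.eq_zero_or_pos n with rfl | hn
    · simp [cComp_zero, hS, okPart]
    · rw [cComp_rec k n hn, if_neg hn.ne']
      simp [hS]
  have h2 : (1 - X ^ 2) * (1 - S) = ((1 - 2 * X) * (1 + X) + X ^ (k + δ) : PowerSeries ℂ) := by
    have e1 : ((1 - 2 * X) * (1 + X) + X ^ (k + δ) : PowerSeries ℂ)
      = 1 - X - X ^ 2 - X ^ 2 + X ^ (k + δ) := by ring
    have e2 : (1 - X ^ 2) * (1 - S) = 1 - S - X ^ 2 + X ^ 2 * S := by ring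
    rw [e1, e2]
    have h3 : X ^ 2 * S + X + X ^ 2 = S + X ^ (k + δ) := by
      ext n
      simp only [map_add, coeff_X_pow_mul', coeff_X_pow, coeff_X, hS, coeff_mk]
      have hδ' : (Odd k ∧ δ = 1) ∨ (Even k ∧ δ = 2) := by
        split_ifs at hδ with h
        · exact Or.inl ⟨h, hδ⟩
        · exact Or.inr ⟨by simpa using h, hδ⟩
      unfold okPart
      simp only [Nat.even_iff, Nat.odd_iff] at *
      split_ifs <;> first | (exfalso; omega) | simp
    linear_combination h3
  rw [← h2]
  linear_combination (1 - X ^ 2) * h1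

open Polynomial in
lemma Rnodal (K : ℕ) (hK : 4 ≤ K) (R : ℂ[X]) (hR : R = (1 - 2 * X) * (1 + X) + X ^ K)
    (α : Fin K → ℂ) (hα : Function.Injective α) (hroot : ∀ i, R.IsRoot (α i)) :
    R = Lagrange.nodal Finset.univ α := by
  have e : R = X ^ K + (1 - X - 2 * X ^ 2) := by rw [hR]; ring
  have hd : (1 - X - 2 * X ^ 2 : ℂ[X]).degree < K := by
    have : (1 - X - 2 * X ^ 2 : ℂ[X]).degree ≤ 2 := by compute_degree
    exact lt_of_le_of_lt this (by exact_mod_cast (by omega : 2 < K))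
  have hm : R.Monic := by rw [e]; exact monic_X_pow_add hd
  have hdeg : R.degree = K := by
    rw [e, degree_add_eq_left_of_degree_lt] <;> simp [hd]
  apply Polynomial.eq_of_degree_sub_lt_of_eval_index_eq Finset.univ hα.injOn
  · have := Polynomial.degree_sub_lt_left (p := R) (q := Lagrange.nodal Finset.univ α)
      (by rw [hdeg, Lagrange.degree_nodal]; simp) hm.ne_zero
      (by rw [hm.leadingCoeff, Lagrange.nodal_monic.leadingCoeff])
    simpa [hdeg] using this
  · intro i _
    rw [hroot i, Lagrange.eval_nodal_at_node (Finset.mem_univ i)]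

open Polynomial in
lemma rhs (K : ℕ) (hK : 4 ≤ K) (R : ℂ[X]) (hR : R = (1 - 2 * X) * (1 + X) + X ^ K)
    (α : Fin K → ℂ) (hα : Function.Injective α) (hroot : ∀ i, R.IsRoot (α i)) :
    (R : PowerSeries ℂ) * PowerSeries.mk (fun n => ∑ i,
        (-((1 - α i ^ 2) / (α i * R.derivative.eval (α i)))) * (α i)⁻¹ ^ n)
      = 1 - PowerSeries.X ^ 2 := by
  have hn := Rnodal K hK R hR α hα hroot
  have h0 : ∀ i, α i ≠ 0 := by
    intro i h
    have := hroot i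
    rw [h, hR] at this
    have hK0 : K ≠ 0 := by omega
    simp [hK0] at this
  have hint : (1 - X ^ 2 : ℂ[X]) = ∑ i, C ((1 - α i ^ 2) / R.derivative.eval (α i)) *
      (R / (X - C (α i))) := by
    have := Lagrange.eq_interpolate (s := Finset.univ) (v := α) (f := (1 - X ^ 2 : ℂ[X]))
      hα.injOn (by
        have : (1 - X ^ 2 : ℂ[X]).degree ≤ 2 := by compute_degree
        exact lt_of_le_of_lt this (by simp; exact_mod_cast (by omega : 2 < K)))
    rw [this, Lagrange.interpolate_apply]
    apply Finset.sum_congr rfl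
    intro i _
    rw [Lagrange.basis_eq_prod_sub_inv_mul_nodal_div (Finset.mem_univ i),
      Lagrange.nodalWeight_eq_eval_derivative_nodal (Finset.mem_univ i), ← hn, ← mul_assoc, ← C_mul]
    simp [div_eq_mul_inv]
  have hcoe : (1 - PowerSeries.X ^ 2 : PowerSeries ℂ) = ((1 - X ^ 2 : ℂ[X]) : PowerSeries ℂ) := by
    simp
  have hsum : PowerSeries.mk (fun n => ∑ i,
        (-((1 - α i ^ 2) / (α i * R.derivative.eval (α i)))) * (α i)⁻¹ ^ n) =
      ∑ i, PowerSeries.C (-((1 - α i ^ 2) / (α i * R.derivative.eval (α i)))) *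
        PowerSeries.mk (fun n => (α i)⁻¹ ^ n) := by
    ext n
    simp [map_sum]
  rw [hcoe, hint, hsum, Finset.mul_sum, ← Polynomial.coeToPowerSeries.ringHom_apply
    (φ := ∑ i, _), map_sum]
  apply Finset.sum_congr rfl
  intro i _
  have hdiv : R = (X - C (α i)) * (R / (X - C (α i))) :=
    (mul_div_eq_iff_isRoot.2 (hroot i)).symm
  have hgeo : (PowerSeries.X - PowerSeries.C (α i)) * PowerSeries.mk (fun n => (α i)⁻¹ ^ n)
      = - PowerSeries.C (α i) := by
    ext n
    cases n with
    | zero => simp [sub_mul]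
    | succ n =>
      simp [sub_mul, PowerSeries.coeff_succ_X_mul, PowerSeries.coeff_C, pow_succ]
      field_simp [h0 i]
      simp
  have hR2 : (R : PowerSeries ℂ) = (PowerSeries.X - PowerSeries.C (α i)) *
      ((R / (X - C (α i)) : ℂ[X]) : PowerSeries ℂ) := by
    conv_lhs => rw [hdiv]
    simp
  have hc : PowerSeries.C (-((1 - α i ^ 2) / (α i * R.derivative.eval (α i)))) *
      (- PowerSeries.C (α i)) = PowerSeries.C ((1 - α i ^ 2) / R.derivative.eval (α i)) := by
    rw [← map_neg, ← map_mul]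
    congr 1
    have := h0 i
    rw [neg_mul_neg, mul_comm (α i), ← div_div, div_mul_cancel₀ _ this]
  rw [map_mul, Polynomial.coeToPowerSeries.ringHom_apply, Polynomial.coeToPowerSeries.ringHom_apply,
    Polynomial.coe_C, ← hc]
  generalize PowerSeries.C (-((1 - α i ^ 2) / (α i * R.derivative.eval (α i)))) = c
  generalize hQ : ((R / (X - C (α i)) : ℂ[X]) : PowerSeries ℂ) = Q at *
  rw [hR2]
  linear_combination c * Q * hgeo

theorem stmt6 (k : ℕ) (hk : 2 ≤ k) (δ : ℕ) (hδ : δ = if Odd k then 1 else 2)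
    (R : Polynomial ℂ)
    (hR : R = (1 - 2 * Polynomial.X) * (1 + Polynomial.X) + Polynomial.X ^ (k + δ))
    (α : Fin (k + δ) → ℂ) (hα : Function.Injective α) (hroot : ∀ i, R.IsRoot (α i))
    (n : ℕ) :
    (cComp k n : ℂ) =
      ∑ i : Fin (k + δ),
        (-((1 - α i ^ 2) / (α i * R.derivative.eval (α i)))) * (α i)⁻¹ ^ n := by
  have hK : 4 ≤ k + δ := by
    split_ifs at hδ with h
    · rw [Nat.odd_iff] at h; omega
    · omega
  have h1 := gf k δ hk hδ
  have h2 := rhs (k + δ) hK R hR α hα hroot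
  have hRc : (R : PowerSeries ℂ) = (1 - 2 * PowerSeries.X) * (1 + PowerSeries.X)
      + PowerSeries.X ^ (k + δ) := by
    have h2 : ((2 : Polynomial ℂ) : PowerSeries ℂ) = 2 := by
      exact map_ofNat (Polynomial.coeToPowerSeries.ringHom (R := ℂ)) 2
    rw [hR]; simp [h2]
  have hR0 : (R : PowerSeries ℂ) ≠ 0 := by
    intro h
    have hz := congrArg (PowerSeries.coeff 0) h2
    rw [h] at hz
    simp at hz
  rw [← hRc, ← h2] at h1
  have h3 := mul_left_cancel₀ hR0 h1
  have := congrArg (PowerSeries.coeff n) h3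
  simpa only [PowerSeries.coeff_mk] using this
end
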